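/- Let d ≥ 1, D := {1,...,d}, let B ⊆ D be nonempty, and let Q be a Young function such that L_Q(I^d) is not contained in L log^{|B|} L(I^d) (i.e. there exists g with ‖g‖_{L_Q} < ∞ but ∫_{I^d} |g| log^{|B|}(1+|g|) = ∞). Then sup_{n≥2} ‖L_{n(B)}∘R_{n(B')}‖_{L_Q(I^d) → L^1(I^d)} = ∞, where n(B) denotes the index vector all of whose coordinates equal n, and the operator norm is sup{ ‖(L_{n(B)}∘R_{n(B')})(f)‖_{L^1} : ‖f‖_{L_Q} ≤ 1 }. -/

import Mathlib

open MeasureTheory Filter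

noncomputable section

/-- The unit cube `[0,1)^d`. -/
def unitCube (d : ℕ) : Set (Fin d → ℝ) := Set.univ.pi fun _ => Set.Ico (0:ℝ) 1

/-- Lebesgue measure restricted to the unit cube `[0,1)^d`. -/
def cubeMeasure (d : ℕ) : Measure (Fin d → ℝ) := volume.restrict (unitCube d)

/-- The `1`-periodic function equal to `1` on `[0,1/2)` and to `-1` on `[1/2,1)`. -/
def r0 (x : ℝ) : ℝ := if Int.fract x < 1/2 then 1 else -1

/-- The Rademacher functions. -/
def rademacher (n : ℕ) (x : ℝ) : ℝ := r0 (2 ^ n * x)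

/-- The Walsh functions (in Paley enumeration, via binary digits). -/
def walsh (n : ℕ) (x : ℝ) : ℝ :=
  ∏ k ∈ Finset.range (n + 1), if n.testBit k then rademacher k x else 1

/-- The Walsh–Dirichlet kernel `D_n`. -/
def dirichletKernel (n : ℕ) (x : ℝ) : ℝ := ∑ k ∈ Finset.range n, walsh k x

/-- `l_n = ∑_{k=1}^{n-1} 1/k`. -/
def logSum (n : ℕ) : ℝ := ∑ k ∈ Finset.Icc 1 (n - 1), (1 : ℝ) / k

/-- The Nörlund logarithmic kernel `F_n`. -/
def FKernel (n : ℕ) (u : ℝ) : ℝ :=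
  (1 / logSum n) * ∑ i ∈ Finset.Ico 1 n, dirichletKernel (n - i) u / i

/-- The Riesz logarithmic kernel `G_n`. -/
def GKernel (n : ℕ) (u : ℝ) : ℝ :=
  (1 / logSum n) * ∑ i ∈ Finset.Ico 1 n, dirichletKernel i u / i

/-- Walsh–Fourier coefficient of `f` on the unit cube. -/
def walshCoef {d : ℕ} (f : (Fin d → ℝ) → ℝ) (j : Fin d → ℕ) : ℝ :=
  ∫ x, f x * ∏ i, walsh (j i) (x i) ∂(cubeMeasure d)

/-- Rectangular partial sums of the multiple Walsh–Fourier series. -/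
def rectPartialSum {d : ℕ} (f : (Fin d → ℝ) → ℝ) (N : Fin d → ℕ) (x : Fin d → ℝ) : ℝ :=
  ∑ j ∈ Fintype.piFinset (fun i => Finset.range (N i)),
    walshCoef f j * ∏ i, walsh (j i) (x i)

/-- The mixed logarithmic means `(L_{n_B} ∘ R_{n_{B'}})(f)`. -/
def mixedLogMean {d : ℕ} (B : Finset (Fin d)) (f : (Fin d → ℝ) → ℝ)
    (n : Fin d → ℕ) (x : Fin d → ℝ) : ℝ :=
  (∏ j, logSum (n j))⁻¹ *
    ∑ i ∈ Fintype.piFinset (fun j => Finset.Ico 1 (n j)),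
      rectPartialSum f (fun j => if j ∈ B then n j - i j else i j) x / ∏ j, (i j : ℝ)

/-- A Young function: convex, continuous, even, vanishing at `0`, with
`Q(u)/u → ∞` at `+∞` and `Q(u)/u → 0` at `0`. -/
structure YoungFunction where
  toFun : ℝ → ℝ
  nonneg : ∀ u, 0 ≤ toFun u
  convexOn : ConvexOn ℝ Set.univ toFun
  continuous : Continuous toFun
  even : ∀ u, toFun (-u) = toFun u
  map_zero : toFun 0 = 0
  tendsto_atTop : Tendsto (fun u => toFun u / u) atTop atTop
  tendsto_zero : Tendsto (fun u => toFun u / u) (nhdsWithin 0 {(0:ℝ)}ᶜ) (nhds 0)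

/-- The set of admissible constants `k` in the Luxemburg norm of `f`. -/
def orliczSet {d : ℕ} (Q : YoungFunction) (f : (Fin d → ℝ) → ℝ) : Set ℝ :=
  {k | 0 < k ∧ Integrable (fun x => Q.toFun (|f x| / k)) (cubeMeasure d) ∧
    ∫ x, Q.toFun (|f x| / k) ∂(cubeMeasure d) ≤ 1}

/-- `f` belongs to the Orlicz space `L_Q(I^d)`. -/
def MemOrlicz {d : ℕ} (Q : YoungFunction) (f : (Fin d → ℝ) → ℝ) : Prop :=
  Measurable f ∧ (orliczSet Q f).Nonempty

/-- The Luxemburg norm on the Orlicz space `L_Q(I^d)`. -/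
def orliczNorm {d : ℕ} (Q : YoungFunction) (f : (Fin d → ℝ) → ℝ) : ℝ :=
  sInf (orliczSet Q f)

/-- `p_n = 2^{2n} + 2^{2n-2} + ⋯ + 2^0`. -/
def pIdx (n : ℕ) : ℕ := ∑ k ∈ Finset.range (n + 1), 4 ^ k

/-- `m̃ = ⌊ l_{p_{⌊m/2⌋}-1}/16 - 2^15 ⌋`. -/
def mTilde (m : ℕ) : ℤ := ⌊logSum (pIdx (m / 2) - 1) / 16 - 2 ^ 15⌋

/-- `m₀ = min{m : m̃ > 1}`. -/
def m₀ : ℕ := sInf {m : ℕ | 1 < mTilde m}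

/-- The set `Ω_n`. -/
def Omega (n : ℕ) : Set ℝ :=
  ⋃ m ∈ Finset.Icc n (2 * n),
    Set.Ico ((2:ℝ) ^ (-(m:ℤ) - 1) + (2:ℝ) ^ (-(m:ℤ) - mTilde m)) ((2:ℝ) ^ (-(m:ℤ)))

/-- `k`-th binary digit of `x` (the expansion not terminating in `1`'s). -/
def binDigit (k : ℕ) (x : ℝ) : ℕ := (⌊x * 2 ^ (k + 1)⌋).toNat % 2

/-- Dyadic addition on `[0,1)`. -/
def dyadicAdd (x t : ℝ) : ℝ :=
  ∑' k : ℕ, |(binDigit k x : ℝ) - (binDigit k t : ℝ)| / 2 ^ (k + 1)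

/-- Dyadic convolution `f ∗ K` on `[0,1)`. -/
def dyadicConv (f K : ℝ → ℝ) (x : ℝ) : ℝ :=
  ∫ t in Set.Ico (0:ℝ) 1, f t * K (dyadicAdd x t)

/-- Lebesgue measure restricted to `[0,1)`. -/
def unitMeasure : Measure ℝ := volume.restrict (Set.Ico (0:ℝ) 1)

/-- A set `A ⊆ L_Q(I^d)` is nowhere dense w.r.t. the Luxemburg norm. -/
def OrliczNowhereDense {d : ℕ} (Q : YoungFunction) (A : Set ((Fin d → ℝ) → ℝ)) : Prop :=
  ∀ f, MemOrlicz Q f → ∀ ε > 0, ∃ g, MemOrlicz Q g ∧ ∃ δ > 0,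
    (∀ h, MemOrlicz Q h → orliczNorm Q (h - g) < δ → orliczNorm Q (h - f) < ε) ∧
    (∀ h, MemOrlicz Q h → orliczNorm Q (h - g) < δ → h ∉ A)

/-- A set `A ⊆ L_Q(I^d)` is of first Baire category (meager) w.r.t. the Luxemburg norm. -/
def OrliczMeager {d : ℕ} (Q : YoungFunction) (A : Set ((Fin d → ℝ) → ℝ)) : Prop :=
  ∃ F : ℕ → Set ((Fin d → ℝ) → ℝ), (∀ k, OrliczNowhereDense Q (F k)) ∧ A ⊆ ⋃ k, F k

/-! ### One-dimensional facts about Walsh functions -/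

lemma r0_abs (x : ℝ) : |r0 x| = 1 := by
  unfold r0; split_ifs <;> simp

lemma r0_measurable : Measurable r0 := by
  unfold r0
  exact Measurable.ite (measurableSet_lt measurable_fract measurable_const)
    measurable_const measurable_const

lemma rademacher_abs (n : ℕ) (x : ℝ) : |rademacher n x| = 1 := r0_abs _

lemma rademacher_sq (n : ℕ) (x : ℝ) : rademacher n x * rademacher n x = 1 := by
  rw [← abs_mul_abs_self, rademacher_abs]; norm_num

lemma rademacher_measurable (n : ℕ) : Measurable (rademacher n) :=
  r0_measurable.comp (measurable_const.mul measurable_id)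

lemma walsh_eq_prod (n K : ℕ) (h : n < 2 ^ K) (x : ℝ) :
    walsh n x = ∏ k ∈ Finset.range K, if n.testBit k then rademacher k x else 1 := by
  have key : ∀ K L : ℕ, K ≤ L → n < 2 ^ K →
      (∏ k ∈ Finset.range K, if n.testBit k then rademacher k x else 1) =
      ∏ k ∈ Finset.range L, if n.testBit k then rademacher k x else 1 := by
    intro K L hKL hK
    refine Finset.prod_subset (Finset.range_mono hKL) ?_
    intro k _ hk
    rw [Finset.mem_range, not_lt] at hk
    rw [Nat.testBit_lt_two_pow (hK.trans_le (Nat.pow_le_pow_right (by norm_num) hk))]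
    simp
  unfold walsh
  have h1 : n < 2 ^ (n + 1) := Nat.lt_two_pow_self.trans (Nat.pow_lt_pow_right (by norm_num) (by omega))
  rcases le_total K (n + 1) with hK | hK
  · exact (key _ _ hK h).symm
  · exact key _ _ hK h1

lemma walsh_abs (n : ℕ) (x : ℝ) : |walsh n x| = 1 := by
  unfold walsh
  rw [Finset.abs_prod]
  refine Finset.prod_eq_one fun k _ => ?_
  split_ifs
  · exact rademacher_abs _ _
  · simp

lemma walsh_measurable (n : ℕ) : Measurable (walsh n) := by
  unfold walsh
  refine Finset.measurable_prod _ fun k _ => ?_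
  split_ifs
  · exact rademacher_measurable k
  · exact measurable_const

lemma walsh_zero (x : ℝ) : walsh 0 x = 1 := by simp [walsh]

lemma walsh_two_pow_add (A j : ℕ) (hj : j < 2 ^ A) (x : ℝ) :
    walsh (2 ^ A + j) x = rademacher A x * walsh j x := by
  rw [walsh_eq_prod (2 ^ A + j) (A + 1) (by rw [pow_succ]; omega), walsh_eq_prod j A hj,
    Finset.prod_range_succ, Nat.testBit_two_pow_add_eq, Nat.testBit_lt_two_pow hj]
  simp only [Bool.not_false, if_true]
  rw [mul_comm]
  congr 1
  refine Finset.prod_congr rfl fun k hk => ?_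
  rw [Finset.mem_range] at hk
  rw [Nat.testBit_two_pow_add_gt hk]

lemma walsh_compl (A : ℕ) : ∀ k < 2 ^ A, ∀ x,
    walsh (2 ^ A - 1 - k) x = walsh (2 ^ A - 1) x * walsh k x := by
  induction A with
  | zero =>
    intro k hk x
    have : k = 0 := by simpa using hk
    subst this; simp [walsh_zero]
  | succ A ih =>
    intro k hk x
    have hp : 0 < 2 ^ A := by positivity
    have e : walsh (2 ^ (A + 1) - 1) x = rademacher A x * walsh (2 ^ A - 1) x := by
      rw [← walsh_two_pow_add A _ (by omega)]
      congr 1; rw [pow_succ]; omega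
    rw [e]
    rcases lt_or_ge k (2 ^ A) with h | h
    · have : 2 ^ (A + 1) - 1 - k = 2 ^ A + (2 ^ A - 1 - k) := by rw [pow_succ]; omega
      rw [this, walsh_two_pow_add A _ (by omega), ih k h]; ring
    · obtain ⟨k', rfl⟩ := Nat.exists_eq_add_of_le h
      have hk' : k' < 2 ^ A := by rw [pow_succ] at hk; omega
      have : 2 ^ (A + 1) - 1 - (2 ^ A + k') = 2 ^ A - 1 - k' := by rw [pow_succ]; omega
      rw [this, walsh_two_pow_add A _ hk', ih k' hk']
      linear_combination (-(walsh (2 ^ A - 1) x * walsh k' x)) * rademacher_sq A x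

lemma walsh_eq_one (N j : ℕ) (hj : j < 2 ^ N) (x : ℝ) (h0 : 0 ≤ x) (h1 : x * 2 ^ N < 1) :
    walsh j x = 1 := by
  rw [walsh_eq_prod j N hj]
  refine Finset.prod_eq_one fun k hk => ?_
  rw [Finset.mem_range] at hk
  split_ifs
  swap
  · rfl
  unfold rademacher r0
  have h2 : (2:ℝ) ^ k * x < 1 / 2 := by
    have : (2:ℝ) ^ (k + 1) ≤ 2 ^ N := pow_le_pow_right₀ (by norm_num) hk
    rw [pow_succ] at this
    nlinarith
  have h3 : Int.fract ((2:ℝ) ^ k * x) = 2 ^ k * x :=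
    Int.fract_eq_self.2 ⟨by positivity, by linarith⟩
  rw [h3, if_pos h2]

lemma dk_succ (n : ℕ) (x : ℝ) : dirichletKernel (n + 1) x = dirichletKernel n x + walsh n x :=
  Finset.sum_range_succ _ _

lemma dk_zero (x : ℝ) : dirichletKernel 0 x = 0 := by simp [dirichletKernel]

lemma dk_two_pow_add (A j : ℕ) (hj : j ≤ 2 ^ A) (x : ℝ) :
    dirichletKernel (2 ^ A + j) x
      = dirichletKernel (2 ^ A) x + rademacher A x * dirichletKernel j x := by
  unfold dirichletKernel
  rw [Finset.sum_range_add, Finset.mul_sum]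
  congr 1
  refine Finset.sum_congr rfl fun i hi => ?_
  rw [Finset.mem_range] at hi
  exact walsh_two_pow_add A i (by omega) x

lemma dk_two_pow (A : ℕ) (x : ℝ) :
    dirichletKernel (2 ^ A) x = 0 ∨ dirichletKernel (2 ^ A) x = 2 ^ A := by
  induction A with
  | zero => right; simp [dirichletKernel, walsh_zero]
  | succ A ih =>
    have : dirichletKernel (2 ^ (A + 1)) x
        = (1 + rademacher A x) * dirichletKernel (2 ^ A) x := by
      rw [pow_succ, mul_two, dk_two_pow_add A _ le_rfl]; ring
    rw [this]
    rcases ih with h | h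
    · left; rw [h, mul_zero]
    · rw [h]
      rcases abs_eq (by norm_num : (0:ℝ) ≤ 1) |>.1 (rademacher_abs A x) with h | h
      · right; rw [h, pow_succ]; ring
      · left; rw [h]; ring

lemma dk_two_pow_nonneg (A : ℕ) (x : ℝ) : 0 ≤ dirichletKernel (2 ^ A) x := by
  rcases dk_two_pow A x with h | h <;> rw [h]; positivity

lemma dk_abs_le (n : ℕ) (x : ℝ) : |dirichletKernel n x| ≤ n := by
  unfold dirichletKernel
  refine (Finset.abs_sum_le_sum_abs _ _).trans ?_
  simp [walsh_abs]

lemma dk_compl (A i : ℕ) (hi : i ≤ 2 ^ A) (x : ℝ) :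
    dirichletKernel (2 ^ A - i) x
      = dirichletKernel (2 ^ A) x - walsh (2 ^ A - 1) x * dirichletKernel i x := by
  induction i with
  | zero => simp [dk_zero]
  | succ i ih =>
    have h1 := ih (by omega)
    have h2 := dk_succ (2 ^ A - 1 - i) x
    have h3 : 2 ^ A - 1 - i + 1 = 2 ^ A - i := by omega
    have h4 : 2 ^ A - 1 - i = 2 ^ A - (i + 1) := by omega
    rw [h3, walsh_compl A i (by omega), h4] at h2
    rw [dk_succ]
    linear_combination h1 - h2

/-- partial sums of the Dirichlet kernels -/
def TK (M : ℕ) (x : ℝ) : ℝ := ∑ i ∈ Finset.range M, dirichletKernel i x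

lemma TK_two_pow_add (A j : ℕ) (hj : j ≤ 2 ^ A) (x : ℝ) :
    TK (2 ^ A + j) x = TK (2 ^ A) x + j * dirichletKernel (2 ^ A) x + rademacher A x * TK j x := by
  unfold TK
  rw [Finset.sum_range_add, Finset.mul_sum, add_assoc]
  congr 1
  have : (j:ℝ) * dirichletKernel (2 ^ A) x
      = ∑ i ∈ Finset.range j, dirichletKernel (2 ^ A) x := by simp
  rw [this, ← Finset.sum_add_distrib]
  refine Finset.sum_congr rfl fun i hi => ?_
  rw [Finset.mem_range] at hi
  exact dk_two_pow_add A i (by omega) x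

lemma TK_two_pow_nonneg (A : ℕ) (x : ℝ) : 0 ≤ TK (2 ^ A) x := by
  induction A with
  | zero => simp [TK, dk_zero]
  | succ A ih =>
    have h := TK_two_pow_add A _ le_rfl x
    rw [← mul_two, ← pow_succ] at h
    rw [h]
    have h1 := dk_two_pow_nonneg A x
    have h2 := (abs_le.1 (rademacher_abs A x).le).1
    have h3 : 0 ≤ ((2 ^ A : ℕ) : ℝ) * dirichletKernel (2 ^ A) x := by positivity
    nlinarith

/-! ### Integrals -/

instance : IsProbabilityMeasure unitMeasure := ⟨by simp [unitMeasure]⟩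

lemma walsh_integrable (n : ℕ) : Integrable (walsh n) unitMeasure :=
  Integrable.of_bound (walsh_measurable n).aestronglyMeasurable 1
    (Eventually.of_forall fun x => by simp [walsh_abs])

lemma dk_measurable (n : ℕ) : Measurable (dirichletKernel n) :=
  Finset.measurable_fun_sum _ fun k _ => walsh_measurable k

lemma dk_integrable (n : ℕ) : Integrable (dirichletKernel n) unitMeasure :=
  integrable_finsetSum _ fun k _ => walsh_integrable k

lemma TK_integrable (n : ℕ) : Integrable (TK n) unitMeasure :=
  integrable_finsetSum _ fun k _ => dk_integrable k

lemma rad_mul_integrable {A : ℕ} {f : ℝ → ℝ} (hf : Integrable f unitMeasure) :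
    Integrable (fun x => rademacher A x * f x) unitMeasure :=
  hf.bdd_mul (c := 1) (rademacher_measurable A).aestronglyMeasurable
    (Eventually.of_forall fun x => by simp [rademacher_abs])

lemma walsh_mul_integrable {A : ℕ} {f : ℝ → ℝ} (hf : Integrable f unitMeasure) :
    Integrable (fun x => walsh A x * f x) unitMeasure :=
  hf.bdd_mul (c := 1) (walsh_measurable A).aestronglyMeasurable
    (Eventually.of_forall fun x => by simp [walsh_abs])

lemma walsh_half (q : ℕ) (b : Bool) (x : ℝ) :
    walsh (Nat.bit b q) x = (if b then r0 x else 1) * walsh q (2 * x) := by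
  have hq : q < 2 ^ q := Nat.lt_two_pow_self
  have h2 : Nat.bit b q < 2 ^ (q + 1) := by
    rw [pow_succ]; cases b <;> simp [Nat.bit] <;> omega
  rw [walsh_eq_prod _ _ h2, walsh_eq_prod _ _ hq, Finset.prod_range_succ', mul_comm]
  congr 1
  · rw [Nat.testBit_bit_zero]; simp [rademacher]
  · refine Finset.prod_congr rfl fun k _ => ?_
    rw [Nat.testBit_bit_succ]
    simp only [rademacher, pow_succ, mul_assoc]

lemma walsh_periodic (q : ℕ) (x : ℝ) : walsh q (x + 1) = walsh q x := by
  unfold walsh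
  refine Finset.prod_congr rfl fun k _ => ?_
  have : rademacher k (x + 1) = rademacher k x := by
    unfold rademacher r0
    have : (2:ℝ) ^ k * (x + 1) = 2 ^ k * x + ((2 ^ k : ℕ) : ℝ) := by push_cast; ring
    rw [this, Int.fract_add_natCast]
  rw [this]

lemma walsh_ii (n : ℕ) (a b : ℝ) : IntervalIntegrable (walsh n) volume a b := by
  rw [intervalIntegrable_iff]
  have : IsFiniteMeasure (volume.restrict (Set.uIoc a b)) :=
    ⟨by rw [Measure.restrict_apply_univ, Set.uIoc]; exact measure_Ioc_lt_top⟩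
  exact Integrable.of_bound (walsh_measurable n).aestronglyMeasurable 1
    (Eventually.of_forall fun x => by simp [walsh_abs])

lemma integral_unit (f : ℝ → ℝ) : ∫ x, f x ∂unitMeasure = ∫ x in (0:ℝ)..1, f x := by
  rw [intervalIntegral.integral_of_le zero_le_one, unitMeasure, integral_Ico_eq_integral_Ioc]

lemma integral_walsh_bit (q : ℕ) (b : Bool) :
    ∫ x in (0:ℝ)..1, walsh (Nat.bit b q) x
      = (if b then 0 else 1) * ∫ x in (0:ℝ)..1, walsh q x := by
  rw [← intervalIntegral.integral_add_adjacent_intervals (walsh_ii _ 0 (1/2)) (walsh_ii _ (1/2) 1)]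
  have e1 : ∫ x in (0:ℝ)..(1/2), walsh (Nat.bit b q) x
      = ∫ x in (0:ℝ)..(1/2), walsh q (2 * x) := by
    rw [intervalIntegral.integral_of_le (by norm_num), intervalIntegral.integral_of_le (by norm_num),
      ← integral_Ico_eq_integral_Ioc, ← integral_Ico_eq_integral_Ioc]
    refine setIntegral_congr_fun measurableSet_Ico fun x hx => ?_
    simp only [walsh_half]
    have : r0 x = 1 := by
      unfold r0
      rw [Int.fract_eq_self.2 ⟨hx.1, by linarith [hx.2]⟩, if_pos hx.2]
    rw [this]; simp
  have e2 : ∫ x in (1/2:ℝ)..1, walsh (Nat.bit b q) x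
      = ∫ x in (1/2:ℝ)..1, (if b then -1 else 1) * walsh q (2 * x) := by
    rw [intervalIntegral.integral_of_le (by norm_num), intervalIntegral.integral_of_le (by norm_num),
      ← integral_Ico_eq_integral_Ioc, ← integral_Ico_eq_integral_Ioc]
    refine setIntegral_congr_fun measurableSet_Ico fun x hx => ?_
    simp only [walsh_half]
    have : r0 x = -1 := by
      unfold r0
      rw [Int.fract_eq_self.2 ⟨by linarith [hx.1], hx.2⟩, if_neg (by linarith [hx.1])]
    rw [this]
  rw [e1, e2, intervalIntegral.integral_const_mul,
    intervalIntegral.integral_comp_mul_left _ (by norm_num : (2:ℝ) ≠ 0),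
    intervalIntegral.integral_comp_mul_left _ (by norm_num : (2:ℝ) ≠ 0)]
  have e3 : ∫ x in (2 * (1/2) : ℝ)..(2 * 1), walsh q x = ∫ x in (0:ℝ)..1, walsh q x := by
    have := intervalIntegral.integral_comp_add_right (a := 0) (b := 1) (walsh q) 1
    simp only [walsh_periodic] at this
    rw [this]; norm_num
  rw [e3]
  have e4 : (2:ℝ) * (1/2) = 1 := by norm_num
  rw [e4, mul_zero]
  cases b
  · simp; ring
  · simp

lemma integral_walsh (n : ℕ) (hn : n ≠ 0) : ∫ x in (0:ℝ)..1, walsh n x = 0 := by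
  induction n using Nat.binaryRec' with
  | zero => exact absurd rfl hn
  | bit b q h ih =>
    rw [integral_walsh_bit]
    cases b with
    | true => simp
    | false =>
      have : q ≠ 0 := by rintro rfl; simp at hn
      rw [ih this, mul_zero]

lemma integral_dk (n : ℕ) : ∫ x, dirichletKernel (n + 1) x ∂unitMeasure = 1 := by
  unfold dirichletKernel
  rw [integral_finsetSum _ fun k _ => walsh_integrable k, Finset.sum_range_succ',
    Finset.sum_eq_zero]
  · simp [walsh_zero]
  · intro k _
    rw [integral_unit, integral_walsh _ (by omega)]

lemma integral_dk_pos (n : ℕ) (hn : 1 ≤ n) : ∫ x, dirichletKernel n x ∂unitMeasure = 1 := by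
  obtain ⟨m, rfl⟩ := Nat.exists_eq_add_of_le' hn
  exact integral_dk m

lemma integral_dk_le (n : ℕ) : ∫ x, dirichletKernel n x ∂unitMeasure ≤ 1 := by
  rcases n with _ | n
  · simp [dk_zero]
  · rw [integral_dk]

lemma TK_norm (M : ℕ) : ∫ x, |TK M x| ∂unitMeasure ≤ 2 * M := by
  induction M using Nat.strong_induction_on with
  | _ M ih =>
  rcases Nat.eq_zero_or_pos M with rfl | hM
  · simp [TK]
  set A := Nat.log 2 M
  have h1 : 2 ^ A ≤ M := Nat.pow_log_le_self 2 hM.ne'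
  have h2 : M < 2 ^ (A + 1) := Nat.lt_pow_succ_log_self (by norm_num) M
  obtain ⟨j, hj⟩ := Nat.exists_eq_add_of_le h1
  have hj2 : j ≤ 2 ^ A := by rw [pow_succ] at h2; omega
  have hp : 0 < 2 ^ A := by positivity
  have ihj := ih j (by omega)
  have hT : ∫ x, TK (2 ^ A) x ∂unitMeasure ≤ 2 ^ A := by
    unfold TK
    rw [integral_finsetSum _ fun k _ => dk_integrable k]
    refine (Finset.sum_le_sum fun i _ => integral_dk_le i).trans ?_
    simp
  have hD := integral_dk_pos (2 ^ A) (by omega)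
  have i1 := TK_integrable (2 ^ A)
  have i2 := (dk_integrable (2 ^ A)).const_mul (j:ℝ)
  have i3 := (TK_integrable j).abs
  have : ∫ x, |TK M x| ∂unitMeasure ≤
      ∫ x, (TK (2 ^ A) x + j * dirichletKernel (2 ^ A) x + |TK j x|) ∂unitMeasure := by
    refine integral_mono (TK_integrable M).abs ((i1.add i2).add i3) fun x => ?_
    show |TK M x| ≤ _
    rw [hj, TK_two_pow_add A j hj2]
    have a1 := TK_two_pow_nonneg A x
    have a2 : 0 ≤ (j:ℝ) * dirichletKernel (2 ^ A) x :=
      mul_nonneg (by positivity) (dk_two_pow_nonneg A x)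
    refine (abs_add_le _ _).trans ?_
    rw [abs_of_nonneg (add_nonneg a1 a2), abs_mul, rademacher_abs, one_mul]
  have i12 : Integrable (fun x => TK (2 ^ A) x + j * dirichletKernel (2 ^ A) x) unitMeasure :=
    i1.add i2
  rw [integral_add i12 i3, integral_add i1 i2, integral_const_mul, hD] at this
  have hj3 : (j:ℝ) ≤ 2 ^ A := by exact_mod_cast hj2
  have : (M:ℝ) = 2 ^ A + j := by exact_mod_cast hj
  linarith

lemma abel_norm (M : ℕ) : ∀ a : ℕ → ℝ, (∀ i < M, 0 ≤ a i) → (∀ i j, i ≤ j → j < M → a j ≤ a i) →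
    ∫ x, |∑ i ∈ Finset.range M, a i * dirichletKernel i x| ∂unitMeasure
      ≤ 2 * ∑ i ∈ Finset.range M, a i := by
  induction M with
  | zero => intro a _ _; simp
  | succ M ih =>
    intro a h0 ha
    have := ih (fun i => a i - a M) (fun i hi => sub_nonneg.2 (ha i M hi.le (by omega)))
      (fun i j hij hj => sub_le_sub_right (ha i j hij (by omega)) _)
    have i1 : Integrable (fun x => ∑ i ∈ Finset.range M, (a i - a M) * dirichletKernel i x)
      unitMeasure := integrable_finsetSum _ fun i _ => (dk_integrable i).const_mul _
    have i2 := ((TK_integrable (M + 1)).abs.const_mul (a M))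
    have i0 : Integrable (fun x => ∑ i ∈ Finset.range (M + 1), a i * dirichletKernel i x)
      unitMeasure := integrable_finsetSum _ fun i _ => (dk_integrable i).const_mul _
    have hm : ∫ x, |∑ i ∈ Finset.range (M + 1), a i * dirichletKernel i x| ∂unitMeasure ≤
        ∫ x, (|∑ i ∈ Finset.range M, (a i - a M) * dirichletKernel i x|
          + a M * |TK (M + 1) x|) ∂unitMeasure := by
      refine integral_mono i0.abs (i1.abs.add i2) fun x => ?_
      show |∑ i ∈ Finset.range (M + 1), a i * dirichletKernel i x| ≤ _
      have : ∑ i ∈ Finset.range (M + 1), a i * dirichletKernel i x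
          = ∑ i ∈ Finset.range M, (a i - a M) * dirichletKernel i x + a M * TK (M + 1) x := by
        unfold TK
        rw [Finset.sum_range_succ, Finset.sum_range_succ, mul_add, Finset.mul_sum, ← add_assoc,
          ← Finset.sum_add_distrib]
        congr 1
        exact Finset.sum_congr rfl fun i _ => by ring
      rw [this]
      refine (abs_add_le _ _).trans ?_
      rw [abs_mul, abs_of_nonneg (h0 M (by omega))]
    rw [integral_add i1.abs i2, integral_const_mul] at hm
    have hT := mul_le_mul_of_nonneg_left (TK_norm (M + 1)) (h0 M (by omega))
    rw [Finset.sum_sub_distrib] at this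
    rw [Finset.sum_range_succ]
    simp only [Finset.sum_const, Finset.card_range, nsmul_eq_mul] at this
    push_cast at hT
    linarith

/-! ### The unnormalised Nörlund kernel -/

def HK (n : ℕ) (x : ℝ) : ℝ := ∑ i ∈ Finset.Ico 1 n, dirichletKernel (n - i) x / i

lemma HK_integrable (n : ℕ) : Integrable (HK n) unitMeasure :=
  integrable_finsetSum _ fun i _ => (dk_integrable _).div_const _

lemma logSum_eq (n : ℕ) : logSum n = ∑ k ∈ Finset.Ico 1 n, (1:ℝ) / k := by
  unfold logSum
  refine Finset.sum_congr ?_ fun _ _ => rfl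
  ext k; simp only [Finset.mem_Icc, Finset.mem_Ico]; omega

lemma logSum_harmonic (n : ℕ) : logSum (n + 1) = (harmonic n : ℝ) := by
  rw [logSum, harmonic_eq_sum_Icc]
  push_cast
  simp

lemma logSum_ge (n : ℕ) (hn : 1 ≤ n) : Real.log n ≤ logSum n := by
  obtain ⟨m, rfl⟩ := Nat.exists_eq_add_of_le' hn
  rw [logSum_harmonic]
  exact log_add_one_le_harmonic m

lemma logSum_le (n : ℕ) (hn : 1 ≤ n) : logSum n ≤ 1 + Real.log n := by
  obtain ⟨m, rfl⟩ := Nat.exists_eq_add_of_le' hn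
  rw [logSum_harmonic]
  refine (harmonic_le_one_add_log m).trans ?_
  rcases Nat.eq_zero_or_pos m with rfl | h
  · simp
  · have : Real.log m ≤ Real.log ((m + 1 : ℕ) : ℝ) :=
      Real.log_le_log (by exact_mod_cast h) (by push_cast; linarith)
    linarith

lemma logSum_pos (n : ℕ) (hn : 2 ≤ n) : 0 < logSum n :=
  lt_of_lt_of_le (Real.log_pos (by exact_mod_cast hn)) (logSum_ge n (by omega))

lemma logSum_mono {m n : ℕ} (h : m ≤ n) : logSum m ≤ logSum n := by
  rw [logSum_eq, logSum_eq]
  refine Finset.sum_le_sum_of_subset_of_nonneg (Finset.Ico_subset_Ico_right h) ?_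
  intros; positivity

lemma HK_abs_le (n : ℕ) (x : ℝ) : |HK n x| ≤ n * logSum n := by
  unfold HK
  rw [logSum_eq, Finset.mul_sum]
  refine (Finset.abs_sum_le_sum_abs _ _).trans (Finset.sum_le_sum fun i _ => ?_)
  rw [abs_div, mul_one_div, Nat.abs_cast]
  gcongr
  refine (dk_abs_le _ _).trans ?_
  exact_mod_cast Nat.sub_le n i

lemma HK_rec (A n' : ℕ) (h1 : 1 ≤ n') (h2 : n' ≤ 2 ^ A) (x : ℝ) :
    HK (2 ^ A + n') x = logSum (2 ^ A + n') * dirichletKernel (2 ^ A) x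
      - walsh (2 ^ A - 1) x *
        (∑ s ∈ Finset.range (2 ^ A), (1 / ((n':ℝ) + s)) * dirichletKernel s x)
      + rademacher A x * HK n' x := by
  have e : ∀ f : ℕ → ℝ, ∑ i ∈ Finset.Ico 1 (2 ^ A + n'), f i
      = ∑ i ∈ Finset.Ico 1 n', f i + ∑ s ∈ Finset.range (2 ^ A), f (n' + s) := by
    intro f
    rw [← Finset.sum_Ico_consecutive f h1 (by omega : n' ≤ 2 ^ A + n')]
    congr 1
    rw [Finset.sum_Ico_eq_sum_range]
    simp
  rw [logSum_eq, HK, e, e, HK]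
  have a1 : ∑ i ∈ Finset.Ico 1 n', dirichletKernel (2 ^ A + n' - i) x / (i:ℝ)
      = (∑ i ∈ Finset.Ico 1 n', 1 / (i:ℝ)) * dirichletKernel (2 ^ A) x
        + rademacher A x * ∑ i ∈ Finset.Ico 1 n', dirichletKernel (n' - i) x / (i:ℝ) := by
    rw [Finset.sum_mul, Finset.mul_sum, ← Finset.sum_add_distrib]
    refine Finset.sum_congr rfl fun i hi => ?_
    rw [Finset.mem_Ico] at hi
    rw [show 2 ^ A + n' - i = 2 ^ A + (n' - i) by omega, dk_two_pow_add A _ (by omega)]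
    ring
  have a2 : ∑ s ∈ Finset.range (2 ^ A), dirichletKernel (2 ^ A + n' - (n' + s)) x / ((n' + s : ℕ):ℝ)
      = (∑ s ∈ Finset.range (2 ^ A), 1 / ((n' + s : ℕ):ℝ)) * dirichletKernel (2 ^ A) x
      - walsh (2 ^ A - 1) x *
        (∑ s ∈ Finset.range (2 ^ A), (1 / ((n':ℝ) + s)) * dirichletKernel s x) := by
    rw [Finset.sum_mul, Finset.mul_sum, ← Finset.sum_sub_distrib]
    refine Finset.sum_congr rfl fun s hs => ?_
    rw [Finset.mem_range] at hs
    rw [show 2 ^ A + n' - (n' + s) = 2 ^ A - s by omega, dk_compl A _ (by omega)]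
    push_cast
    ring
  rw [a1, a2]
  ring

lemma HK_norm_step (A n' : ℕ) (h1 : 1 ≤ n') (h3 : 3 * n' ≤ 2 ^ A) (h4 : 2 ^ A ≤ 4 * n') :
    ∫ x, |HK n' x| ∂unitMeasure + logSum (2 ^ A + n') / 3 - 8
      ≤ ∫ x, |HK (2 ^ A + n') x| ∂unitMeasure := by
  have hn' : (1:ℝ) ≤ n' := by exact_mod_cast h1
  have h3' : 3 * (n':ℝ) ≤ 2 ^ A := by exact_mod_cast h3
  have h4' : (2:ℝ) ^ A ≤ 4 * n' := by exact_mod_cast h4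
  set E : ℝ → ℝ := fun x => ∑ s ∈ Finset.range (2 ^ A), (1 / ((n':ℝ) + s)) * dirichletKernel s x
    with hE
  have iE : Integrable E unitMeasure :=
    integrable_finsetSum _ fun i _ => (dk_integrable i).const_mul _
  have nE : ∫ x, |E x| ∂unitMeasure ≤ 8 := by
    refine (abel_norm (2 ^ A) (fun s => 1 / ((n':ℝ) + s)) ?_ ?_).trans ?_
    · intros; positivity
    · intro i j hij _
      have : (i:ℝ) ≤ j := by exact_mod_cast hij
      apply one_div_le_one_div_of_le <;> [positivity; linarith]
    · have : ∑ s ∈ Finset.range (2 ^ A), 1 / ((n':ℝ) + s) ≤ ∑ s ∈ Finset.range (2 ^ A), 1 / (n':ℝ) := by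
        refine Finset.sum_le_sum fun s _ => one_div_le_one_div_of_le (by linarith) ?_
        have : (0:ℝ) ≤ s := by positivity
        linarith
      rw [Finset.sum_const, Finset.card_range, nsmul_eq_mul] at this
      have h5 : ((2 ^ A : ℕ) : ℝ) * (1 / n') ≤ 4 := by
        push_cast
        rw [mul_one_div, div_le_iff₀ (by linarith)]
        exact h4'
      linarith
  set l := logSum (2 ^ A + n')
  have hl : logSum n' ≤ l := logSum_mono (by omega)
  have hl0 : 0 ≤ logSum n' := le_trans (Real.log_nonneg hn') (logSum_ge n' h1)
  have iD := (dk_integrable (2 ^ A)).mul_const (l / 3)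
  have iH := (HK_integrable n').abs
  have i12 : Integrable (fun x => |HK n' x| + dirichletKernel (2 ^ A) x * (l / 3)) unitMeasure :=
    iH.add iD
  have key : ∫ x, (|HK n' x| + dirichletKernel (2 ^ A) x * (l / 3) - |E x|) ∂unitMeasure
      ≤ ∫ x, |HK (2 ^ A + n') x| ∂unitMeasure := by
    refine integral_mono (i12.sub iE.abs) (HK_integrable _).abs fun x => ?_
    show |HK n' x| + dirichletKernel (2 ^ A) x * (l / 3) - |E x| ≤ |HK (2 ^ A + n') x|
    rw [HK_rec A n' h1 (by omega)]
    have b1 : |walsh (2 ^ A - 1) x * E x| = |E x| := by rw [abs_mul, walsh_abs, one_mul]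
    have b2 : |rademacher A x * HK n' x| = |HK n' x| := by rw [abs_mul, rademacher_abs, one_mul]
    have b3 : |HK n' x| ≤ n' * l :=
      (HK_abs_le n' x).trans (mul_le_mul_of_nonneg_left hl (by linarith))
    set a := walsh (2 ^ A - 1) x * E x
    set b := rademacher A x * HK n' x
    rcases dk_two_pow A x with h | h
    · rw [h]
      have : |b| - |a| ≤ |b - a| := abs_sub_abs_le_abs_sub b a
      rw [show l * 0 - a + b = b - a by ring]
      linarith
    · rw [h]
      have c1 := le_abs_self (l * 2 ^ A - a + b)
      have c2 := le_abs_self a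
      have c3 := neg_abs_le b
      have c4 : 3 * (n' * l) ≤ 2 ^ A * l := by nlinarith
      linarith
  rw [integral_sub i12 iE.abs, integral_add iH iD, integral_mul_const,
    integral_dk_pos _ Nat.one_le_two_pow] at key
  linarith

lemma pIdx_succ (m : ℕ) : pIdx (m + 1) = 2 ^ (2 * (m + 1)) + pIdx m := by
  unfold pIdx
  rw [Finset.sum_range_succ, pow_mul, add_comm]; norm_num

lemma pIdx_bounds (m : ℕ) : 4 ^ m ≤ pIdx m ∧ 3 * pIdx m + 1 = 4 ^ (m + 1) := by
  induction m with
  | zero => simp [pIdx]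
  | succ m ih =>
    rw [pIdx_succ, pow_mul]
    norm_num
    rw [pow_succ 4 (m + 1)]; omega

lemma logSum_pIdx_ge (m : ℕ) : (m : ℝ) ≤ logSum (pIdx m) := by
  have h := (pIdx_bounds m).1
  have h1 : 1 ≤ pIdx m := le_trans (Nat.one_le_pow _ _ (by norm_num)) h
  refine le_trans ?_ (logSum_ge _ h1)
  have h2 : (4:ℝ) ^ m ≤ pIdx m := by exact_mod_cast h
  have h3 := Real.log_le_log (by positivity) h2
  rw [Real.log_pow, show (4:ℝ) = 2 ^ 2 by norm_num, Real.log_pow] at h3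
  have := Real.log_two_gt_d9
  push_cast at h3
  nlinarith [(Nat.cast_nonneg m : (0:ℝ) ≤ m)]

lemma logSum_pIdx_le (m : ℕ) : logSum (pIdx m) ≤ 2 * m + 3 := by
  have h := (pIdx_bounds m).1
  have h1 : 1 ≤ pIdx m := le_trans (Nat.one_le_pow _ _ (by norm_num)) h
  refine (logSum_le _ h1).trans ?_
  have h2 : (pIdx m : ℝ) ≤ 4 ^ (m + 1) := by
    have := (pIdx_bounds m).2
    exact_mod_cast (by omega : pIdx m ≤ 4 ^ (m + 1))
  have h3 := Real.log_le_log (by exact_mod_cast h1) h2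
  rw [Real.log_pow, show (4:ℝ) = 2 ^ 2 by norm_num, Real.log_pow] at h3
  have := Real.log_two_lt_d9
  push_cast at h3
  nlinarith [(Nat.cast_nonneg m : (0:ℝ) ≤ m)]

lemma HK_pIdx_norm (m : ℕ) :
    (m:ℝ) ^ 2 / 6 - 8 * m ≤ ∫ x, |HK (pIdx m) x| ∂unitMeasure := by
  induction m with
  | zero => simp only [Nat.cast_zero]; norm_num; exact integral_nonneg fun x => abs_nonneg _
  | succ m ih =>
    have hb := pIdx_bounds m
    have h4 : 2 ^ (2 * (m + 1)) = 4 ^ (m + 1) := by rw [pow_mul]; norm_num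
    have h1 : 1 ≤ pIdx m := le_trans (Nat.one_le_pow _ _ (by norm_num)) hb.1
    have := HK_norm_step (2 * (m + 1)) (pIdx m) h1 (by rw [h4]; omega)
      (by rw [h4, pow_succ]; omega)
    rw [← pIdx_succ] at this
    have hl := logSum_pIdx_ge (m + 1)
    push_cast at hl ⊢
    nlinarith [(Nat.cast_nonneg m : (0:ℝ) ≤ m)]

lemma FKernel_eq (n : ℕ) (x : ℝ) : FKernel n x = (1 / logSum n) * HK n x := rfl

lemma FKernel_integrable (n : ℕ) : Integrable (FKernel n) unitMeasure :=
  (HK_integrable n).const_mul _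

lemma GKernel_integrable (n : ℕ) : Integrable (GKernel n) unitMeasure :=
  (integrable_finsetSum _ fun i _ => (dk_integrable _).div_const _ ).const_mul _

lemma GKernel_norm (n : ℕ) (hn : 2 ≤ n) : 1 ≤ ∫ x, |GKernel n x| ∂unitMeasure := by
  have : ∫ x, GKernel n x ∂unitMeasure = 1 := by
    unfold GKernel
    rw [integral_const_mul, integral_finsetSum _ fun i _ => (dk_integrable _).div_const _]
    have : ∑ i ∈ Finset.Ico 1 n, ∫ x, dirichletKernel i x / (i:ℝ) ∂unitMeasure = logSum n := by
      rw [logSum_eq]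
      refine Finset.sum_congr rfl fun i hi => ?_
      rw [Finset.mem_Ico] at hi
      rw [integral_div, integral_dk_pos i hi.1]
    rw [this]
    exact one_div_mul_cancel (logSum_pos n hn).ne'
  rw [← this]
  exact integral_mono (GKernel_integrable n) (GKernel_integrable n).abs fun x => le_abs_self _

/-- The key one-dimensional lower bound. -/
lemma FKernel_lower (N : ℕ) (hN : 1000 ≤ N) :
    ∃ n, 2 ≤ n ∧ n ≤ 2 ^ N ∧ (N:ℝ) / 200 ≤ ∫ x, |FKernel n x| ∂unitMeasure := by
  set m := (N - 1) / 2 with hm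
  have hb := pIdx_bounds m
  have hm1 : 2 * m + 2 ≥ N := by omega
  have hm2 : 2 * m + 1 ≤ N := by omega
  have h2 : 2 ≤ pIdx m := by
    have : 4 ^ 1 ≤ 4 ^ m := Nat.pow_le_pow_right (by norm_num) (by omega)
    omega
  refine ⟨pIdx m, h2, ?_, ?_⟩
  · have : 2 ^ (2 * m + 1) ≤ 2 ^ N := Nat.pow_le_pow_right (by norm_num) hm2
    rw [pow_succ, pow_mul] at this
    norm_num at this
    have h := hb.2
    rw [pow_succ] at h
    omega
  · have h1 := HK_pIdx_norm m
    have h3 := logSum_pIdx_le m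
    have h4 := logSum_pos _ h2
    simp only [FKernel_eq, abs_mul]
    rw [integral_const_mul, abs_of_pos (by positivity), one_div, inv_mul_eq_div, le_div_iff₀ h4]
    have hm1' : (N:ℝ) ≤ 2 * m + 2 := by exact_mod_cast hm1
    have hm3 : (400:ℝ) ≤ m := by exact_mod_cast (by omega : 400 ≤ m)
    have : (N:ℝ) / 200 * logSum (pIdx m) ≤ (2 * m + 2) / 200 * (2 * m + 3) := by gcongr
    nlinarith

/-! ### The multi-dimensional reduction -/

lemma cubeMeasure_eq (d : ℕ) : cubeMeasure d = Measure.pi fun _ => unitMeasure := by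
  unfold cubeMeasure unitCube unitMeasure
  rw [volume_pi, Measure.restrict_pi_pi]

instance (d : ℕ) : IsProbabilityMeasure (cubeMeasure d) := by
  rw [cubeMeasure_eq]; infer_instance

/-- The small dyadic cube. -/
def smallCube (d N : ℕ) : Set (Fin d → ℝ) := Set.univ.pi fun _ => Set.Ico (0:ℝ) (1 / 2 ^ N)

lemma smallCube_measurable (d N : ℕ) : MeasurableSet (smallCube d N) :=
  MeasurableSet.univ_pi fun _ => measurableSet_Ico

lemma smallCube_measure (d N : ℕ) :
    (cubeMeasure d).real (smallCube d N) = (1 / 2 ^ N) ^ d := by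
  rw [cubeMeasure_eq, smallCube, Measure.real, Measure.pi_pi]
  have h : unitMeasure (Set.Ico (0:ℝ) (1 / 2 ^ N)) = ENNReal.ofReal (1 / 2 ^ N) := by
    rw [unitMeasure, Measure.restrict_apply measurableSet_Ico, Set.inter_eq_left.2, Real.volume_Ico,
      sub_zero]
    refine Set.Ico_subset_Ico_right ?_
    rw [div_le_one (by positivity)]
    exact one_le_pow₀ (by norm_num)
  simp only [h, Finset.prod_const, Finset.card_univ, Fintype.card_fin]
  rw [ENNReal.toReal_pow, ENNReal.toReal_ofReal (by positivity)]

/-- The test function. -/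
def testFn (d N : ℕ) (u : ℝ) : (Fin d → ℝ) → ℝ := (smallCube d N).indicator fun _ => u

lemma testFn_coef (d N : ℕ) (u : ℝ) (j : Fin d → ℕ) (hj : ∀ i, j i < 2 ^ N) :
    walshCoef (testFn d N u) j = u * (1 / 2 ^ N) ^ d := by
  unfold walshCoef
  have : (fun x : Fin d → ℝ => testFn d N u x * ∏ i, walsh (j i) (x i)) = testFn d N u := by
    funext x
    by_cases hx : x ∈ smallCube d N
    · rw [Finset.prod_eq_one, mul_one]
      intro i _
      have := hx i (Set.mem_univ i)
      refine walsh_eq_one N _ (hj i) _ this.1 ?_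
      exact (lt_div_iff₀ (by positivity)).1 this.2
    · simp [testFn, hx]
  rw [this, testFn, integral_indicator (smallCube_measurable d N), setIntegral_const,
    smallCube_measure, smul_eq_mul, mul_comm]

lemma testFn_partial (d N : ℕ) (u : ℝ) (K : Fin d → ℕ) (hK : ∀ i, K i ≤ 2 ^ N) (x : Fin d → ℝ) :
    rectPartialSum (testFn d N u) K x
      = u * (1 / 2 ^ N) ^ d * ∏ i, dirichletKernel (K i) (x i) := by
  unfold rectPartialSum dirichletKernel
  rw [Finset.prod_univ_sum, Finset.mul_sum]
  refine Finset.sum_congr rfl fun j hj => ?_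
  rw [Fintype.mem_piFinset] at hj
  rw [testFn_coef]
  intro i
  have := Finset.mem_range.1 (hj i)
  exact this.trans_le (hK i)

lemma testFn_mean (d N : ℕ) (u : ℝ) (B : Finset (Fin d)) (n : ℕ) (hn : n ≤ 2 ^ N)
    (x : Fin d → ℝ) :
    mixedLogMean B (testFn d N u) (fun _ => n) x
      = u * (1 / 2 ^ N) ^ d * ∏ i, (if i ∈ B then FKernel n (x i) else GKernel n (x i)) := by
  unfold mixedLogMean
  have h : ∀ j : Fin d, (if j ∈ B then FKernel n (x j) else GKernel n (x j)) =
      (logSum n)⁻¹ * ∑ i ∈ Finset.Ico 1 n, dirichletKernel (if j ∈ B then n - i else i) (x j) / i := by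
    intro j
    split_ifs <;> simp [FKernel, GKernel]
  simp only [h]
  rw [Finset.prod_mul_distrib, Finset.prod_univ_sum, ← Finset.prod_inv_distrib, mul_left_comm]
  congr 1
  rw [Finset.mul_sum]
  refine Finset.sum_congr rfl fun i hi => ?_
  rw [Fintype.mem_piFinset] at hi
  rw [testFn_partial, Finset.prod_div_distrib, mul_div_assoc]
  intro j
  have := Finset.mem_Ico.1 (hi j)
  split_ifs <;> omega

lemma testFn_mean_norm (d N : ℕ) (u : ℝ) (hu : 0 ≤ u) (B : Finset (Fin d)) (n : ℕ) (hn : n ≤ 2 ^ N)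
    (h2 : 2 ≤ n) :
    u * (1 / 2 ^ N) ^ d * (∫ x, |FKernel n x| ∂unitMeasure) ^ B.card
      ≤ ∫ x, |mixedLogMean B (testFn d N u) (fun _ => n) x| ∂(cubeMeasure d) := by
  simp only [testFn_mean d N u B n hn, abs_mul, Finset.abs_prod]
  rw [integral_const_mul, abs_of_nonneg hu, abs_of_nonneg (by positivity), cubeMeasure_eq]
  refine mul_le_mul_of_nonneg_left ?_ (by positivity)
  have := integral_fintype_prod_eq_prod (𝕜 := ℝ) (μ := fun _ : Fin d => unitMeasure)
    (fun (i : Fin d) (t : ℝ) => |if i ∈ B then FKernel n t else GKernel n t|)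
  rw [this]
  have e : ∀ i : Fin d, (if i ∈ B then ∫ x, |FKernel n x| ∂unitMeasure else 1)
      ≤ ∫ t, |if i ∈ B then FKernel n t else GKernel n t| ∂unitMeasure := by
    intro i
    split_ifs
    · exact le_rfl
    · exact GKernel_norm n h2
  refine le_trans (le_of_eq ?_) (Finset.prod_le_prod (fun i _ => ?_) fun i _ => e i)
  · rw [Finset.prod_ite_mem]; simp
  · split_ifs
    · exact integral_nonneg fun x => abs_nonneg _
    · norm_num

lemma testFn_mem (d N : ℕ) (u : ℝ) (hu : 0 ≤ u) (Q : YoungFunction)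
    (h : Q.toFun u ≤ (2 ^ N) ^ d) :
    MemOrlicz Q (testFn d N u) ∧ orliczNorm Q (testFn d N u) ≤ 1 := by
  have hmem : (1:ℝ) ∈ orliczSet Q (testFn d N u) := by
    have e : (fun x => Q.toFun (|testFn d N u x| / 1))
        = (smallCube d N).indicator fun _ => Q.toFun u := by
      funext x
      by_cases hx : x ∈ smallCube d N
      · simp [testFn, hx, abs_of_nonneg hu]
      · simp [testFn, hx, Q.map_zero]
    refine ⟨one_pos, ?_, ?_⟩
    · rw [e]
      exact (integrable_const _).indicator (smallCube_measurable d N)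
    · rw [e, integral_indicator (smallCube_measurable d N), setIntegral_const,
        smallCube_measure, smul_eq_mul, div_pow, one_pow, one_div, inv_mul_eq_div,
        div_le_one (by positivity)]
      exact h
  refine ⟨⟨measurable_const.indicator (smallCube_measurable d N), 1, hmem⟩, ?_⟩
  exact csInf_le ⟨0, fun k hk => hk.1.le⟩ hmem

/-! ### Choice of the height -/

lemma exists_height (d b : ℕ) (Q : YoungFunction)
    (hQ : ∃ g : (Fin d → ℝ) → ℝ, MemOrlicz Q g ∧
      ¬ Integrable (fun x => |g x| * Real.log (1 + |g x|) ^ b) (cubeMeasure d))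
    (C U : ℝ) (hC : 0 ≤ C) :
    ∃ u, U ≤ u ∧ C * Q.toFun u < u * Real.log (1 + u) ^ b := by
  by_contra hcon
  push Not at hcon
  obtain ⟨g, ⟨hg, k, hk, hQint, -⟩, hni⟩ := hQ
  apply hni
  set V := max U (max k 1)
  have hV1 : 1 ≤ V := (le_max_right _ _).trans (le_max_right _ _)
  have hVk : k ≤ V := (le_max_left _ _).trans (le_max_right _ _)
  have hVU : U ≤ V := le_max_left _ _
  have hdom : Integrable (fun x => k * V * Real.log (1 + k * V) ^ b
      + k * 2 ^ b * C * Q.toFun (|g x| / k)) (cubeMeasure d) :=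
    (integrable_const _).add (hQint.const_mul _)
  refine hdom.mono' ?_ (Eventually.of_forall fun x => ?_)
  · exact (by fun_prop : Measurable fun x => |g x| * Real.log (1 + |g x|) ^ b).aestronglyMeasurable
  have hgx := abs_nonneg (g x)
  have hlog : 0 ≤ Real.log (1 + |g x|) := Real.log_nonneg (by linarith)
  rw [Real.norm_of_nonneg (by positivity)]
  have hQn := Q.nonneg (|g x| / k)
  have hkV : 0 ≤ Real.log (1 + k * V) := Real.log_nonneg (by nlinarith)
  rcases le_total (|g x|) (k * V) with h | h
  · have h1 : Real.log (1 + |g x|) ≤ Real.log (1 + k * V) :=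
      Real.log_le_log (by linarith) (by linarith)
    have : |g x| * Real.log (1 + |g x|) ^ b ≤ k * V * Real.log (1 + k * V) ^ b := by gcongr
    have h2 : 0 ≤ k * 2 ^ b * C * Q.toFun (|g x| / k) := by positivity
    linarith
  · set v := |g x| / k with hv
    have hgv : |g x| = k * v := by rw [hv]; field_simp
    have hVv : V ≤ v := by rw [hv, le_div_iff₀ hk]; linarith
    have hlv : 0 ≤ Real.log (1 + v) := Real.log_nonneg (by linarith)
    have h1 : Real.log (1 + |g x|) ≤ 2 * Real.log (1 + v) := by
      have : 2 * Real.log (1 + v) = Real.log ((1 + v) ^ 2) := by rw [Real.log_pow]; norm_num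
      rw [this, hgv]
      refine Real.log_le_log (by nlinarith) ?_
      nlinarith
    have h2 := hcon v (hVU.trans hVv)
    have h3 : |g x| * Real.log (1 + |g x|) ^ b ≤ |g x| * (2 * Real.log (1 + v)) ^ b := by gcongr
    have h4 : |g x| * (2 * Real.log (1 + v)) ^ b = k * 2 ^ b * (v * Real.log (1 + v) ^ b) := by
      rw [mul_pow, hgv]; ring
    have h5 : k * 2 ^ b * (v * Real.log (1 + v) ^ b) ≤ k * 2 ^ b * (C * Q.toFun v) :=
      mul_le_mul_of_nonneg_left h2 (by positivity)
    have h6 : 0 ≤ k * V * Real.log (1 + k * V) ^ b := by positivity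
    linarith

/-- Theorem (normdiv, part a). If `L_Q(I^d) ⊄ L log^{|B|} L(I^d)` then the
operator norms of `L_{n(B)} ∘ R_{n(B')}` from `L_Q(I^d)` to `L^1(I^d)` are unbounded. -/
theorem stmt2 (d : ℕ) (hd : 1 ≤ d) (B : Finset (Fin d)) (hB : B.Nonempty)
    (Q : YoungFunction)
    (hQ : ∃ g : (Fin d → ℝ) → ℝ, MemOrlicz Q g ∧
      ¬ Integrable (fun x => |g x| * Real.log (1 + |g x|) ^ B.card) (cubeMeasure d)) :
    ∀ C : ℝ, ∃ n : ℕ, 2 ≤ n ∧ ∃ f : (Fin d → ℝ) → ℝ, MemOrlicz Q f ∧ orliczNorm Q f ≤ 1 ∧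
      C < ∫ x, |mixedLogMean B f (fun _ => n) x| ∂(cubeMeasure d) := by
  intro C
  set b := B.card with hb
  -- the constant
  set c : ℝ := (1 / (400 * d)) ^ b / 2 ^ d with hc
  have hd' : (1:ℝ) ≤ d := by exact_mod_cast hd
  have hcpos : 0 < c := by positivity
  obtain ⟨U₁, hU₁⟩ := (Q.tendsto_atTop.eventually_ge_atTop 1).exists_forall_of_atTop
  obtain ⟨u, hu, hlt⟩ := exists_height d b Q hQ (|C| / c) (max U₁ (max 2 ((2 ^ 1000) ^ d + 1)))
    (by positivity)
  have hu1 : U₁ ≤ u := (le_max_left _ _).trans hu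
  have hu2 : 2 ≤ u := (le_max_left _ _).trans ((le_max_right _ _).trans hu)
  have hu3 : (2 ^ 1000) ^ d + 1 ≤ u := (le_max_right _ _).trans ((le_max_right _ _).trans hu)
  have hQu : u ≤ Q.toFun u := by
    have := hU₁ u hu1
    rwa [le_div_iff₀ (by linarith), one_mul] at this
  have hex : ∃ N : ℕ, Q.toFun u ≤ ((2:ℝ) ^ N) ^ d := by
    obtain ⟨N, hN⟩ := pow_unbounded_of_one_lt (Q.toFun u) (by norm_num : (1:ℝ) < 2)
    exact ⟨N, hN.le.trans (le_self_pow₀ (one_le_pow₀ (by norm_num)) (by omega))⟩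
  classical
  set N := Nat.find hex with hNdef
  have hN : Q.toFun u ≤ ((2:ℝ) ^ N) ^ d := Nat.find_spec hex
  have hN1000 : 1000 < N := by
    by_contra hcon
    push Not at hcon
    have : ((2:ℝ) ^ N) ^ d ≤ (2 ^ 1000) ^ d := by
      gcongr
      norm_num
    linarith
  have hNmin : ((2:ℝ) ^ (N - 1)) ^ d < Q.toFun u :=
    not_le.1 (Nat.find_min hex (by omega : N - 1 < N))
  have hNup : ((2:ℝ) ^ N) ^ d ≤ 2 ^ d * Q.toFun u := by
    have : (2:ℝ) ^ N = 2 * 2 ^ (N - 1) := by rw [← pow_succ']; congr 1; omega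
    rw [this, mul_pow]
    gcongr
  obtain ⟨n, hn2, hnN, hF⟩ := FKernel_lower N hN1000.le
  obtain ⟨hmem, hnorm⟩ := testFn_mem d N u (by linarith) Q hN
  refine ⟨n, hn2, testFn d N u, hmem, hnorm, ?_⟩
  refine lt_of_lt_of_le ?_ (testFn_mean_norm d N u (by linarith) B n hnN hn2)
  -- logarithm estimate
  have hlogN : Real.log (1 + u) / (400 * d) ≤ (N:ℝ) / 200 := by
    have h1 : Real.log (1 + u) ≤ 2 * Real.log u := by
      have : 2 * Real.log u = Real.log (u ^ 2) := by rw [Real.log_pow]; norm_num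
      rw [this]
      exact Real.log_le_log (by linarith) (by nlinarith)
    have h2 : Real.log u ≤ N * d := by
      have := Real.log_le_log (by linarith) (hQu.trans hN)
      rw [Real.log_pow, Real.log_pow] at this
      have h3 := Real.log_two_lt_d9
      have h4 : (0:ℝ) ≤ N * d := by positivity
      nlinarith
    rw [div_le_div_iff₀ (by positivity) (by norm_num)]
    nlinarith
  have hlog0 : 0 ≤ Real.log (1 + u) := Real.log_nonneg (by linarith)
  have hQpos : 0 < Q.toFun u := by linarith
  calc C ≤ |C| := le_abs_self C
    _ < c * (u * Real.log (1 + u) ^ b) / Q.toFun u := by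
        rw [lt_div_iff₀ hQpos]
        have := mul_lt_mul_of_pos_left hlt hcpos
        have e : c * (|C| / c * Q.toFun u) = |C| * Q.toFun u := by field_simp
        linarith
    _ = u * (1 / (2 ^ d * Q.toFun u)) * (Real.log (1 + u) / (400 * d)) ^ b := by
        rw [hc, div_pow, div_pow, one_pow]
        field_simp
    _ ≤ u * (1 / 2 ^ N) ^ d * (∫ x, |FKernel n x| ∂unitMeasure) ^ b := by
        have h0 : 0 ≤ u := by linarith
        have h1 : 1 / (2 ^ d * Q.toFun u) ≤ ((1:ℝ) / 2 ^ N) ^ d := by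
          rw [div_pow, one_pow]
          exact one_div_le_one_div_of_le (by positivity) hNup
        have h2 := hlogN.trans hF
        gcongr

end
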